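/- Let f : Λ(n)³ → ℤ satisfy the Duistermaat axioms. Then for any Lagrangian planes L and M: f(L, L, M) = 0, f(M, L, L) = 0, and f(L, M, L) = n − dim(L ∩ M). -/

import Mathlib

/-!
The cocycle identity alone reduces everything to triples `(L, M, N)` in which `N` is transversal to
both `L` and `M`. On `(L, L, M, N)` it gives `f(L,L,M) = f(L,L,N)`, on `(M, L, L, N)` it gives
`f(M,L,L) = f(L,L,N)`, and on `(L, M, L, N)` it gives
`f(L,M,L) = f(L,M,N) + f(M,L,N) - f(L,L,N)`.

By `exists_normal_form` there are such an `N` and a symplectic map carrying `(L, M, N)` to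
`(G_0, G_A, G_∞)` with `A` Hermitian. Invariance and normalization then give
`f(L,L,N) = n_-(0) = 0`, `f(L,M,N) = n_-(A)` and, after the shear `(x, y) ↦ (x, y - A x)`,
`f(M,L,N) = f(G_0, G_{-A}, G_∞) = n_-(-A)`. The last two add up to `rank A` by `negIdxM_add_neg`
(diagonalization), which is `n - dim (L ∩ M)` since `G_0 ∩ G_A` is isomorphic to `ker A`.

The complement `N` is the graph of a real scalar `t`: vectors `(x, s x)` and `(y, t y)` of one
Lagrangian subspace with `s ≠ t` have `x ⟂ y`, so only finitely many `t` fail to be transversal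
(`finite_bad`).
-/

open Matrix

/-- The Hermitian symplectic space `ℂⁿ ⊕ ℂⁿ`. -/
abbrev SympSpace (n : ℕ) := (Fin n → ℂ) × (Fin n → ℂ)

/-- The symplectic form `ω((x₁,x₂),(y₁,y₂)) = ⟨x₁,y₂⟩ − ⟨x₂,y₁⟩`. -/
noncomputable def omegaForm {n : ℕ} (u v : SympSpace n) : ℂ :=
  star u.1 ⬝ᵥ v.2 - star u.2 ⬝ᵥ v.1

/-- A subspace is Lagrangian iff it coincides with its symplectic complement. -/
def IsLagrangian {n : ℕ} (L : Submodule ℂ (SympSpace n)) : Prop :=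
  ∀ v, v ∈ L ↔ ∀ u ∈ L, omegaForm u v = 0

/-- The Lagrangian Grassmannian `Λ(n)`. -/
abbrev LagGr (n : ℕ) := {L : Submodule ℂ (SympSpace n) // IsLagrangian L}

/-- The graph `G_M = {(x, Mx)}` of a matrix `M`. -/
noncomputable def graphOf {n : ℕ} (M : Matrix (Fin n) (Fin n) ℂ) :
    Submodule ℂ (SympSpace n) := LinearMap.graph M.mulVecLin

/-- The vertical subspace `G_∞ = 0 ⊕ ℂⁿ`. -/
noncomputable def vertSub (n : ℕ) : Submodule ℂ (SympSpace n) :=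
  (⊥ : Submodule ℂ (Fin n → ℂ)).prod (⊤ : Submodule ℂ (Fin n → ℂ))

/-- The negative index (Morse index) of a sesquilinear form: the maximal dimension of a
subspace on which it is negative definite. -/
noncomputable def formNegIdx {V : Type*} [AddCommGroup V] [Module ℂ V]
    (Q : V → V → ℂ) : ℕ :=
  sSup {d : ℕ | ∃ W : Submodule ℂ V, Module.finrank ℂ W = d ∧
    ∀ x ∈ W, x ≠ 0 → (Q x x).re < 0}

/-- The number of negative eigenvalues (Morse index) of a Hermitian matrix, as the
maximal dimension of a subspace on which the associated form is negative definite. -/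
noncomputable def negIdxM {n : ℕ} (A : Matrix (Fin n) (Fin n) ℂ) : ℕ :=
  formNegIdx (fun x y : Fin n → ℂ => star x ⬝ᵥ A.mulVec y)

/-- A symplectic transformation: a bijective linear map preserving `ω`. -/
def IsSymplecticMap {n : ℕ} (S : SympSpace n ≃ₗ[ℂ] SympSpace n) : Prop :=
  ∀ u v, omegaForm (S u) (S v) = omegaForm u v

/-- The Duistermaat axioms for `f : Λ(n)³ → ℤ`: normalization, symplectic invariance
and the cocycle property. -/
def SatisfiesDuiAxioms {n : ℕ} (f : LagGr n → LagGr n → LagGr n → ℤ) : Prop :=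
  (∀ (A : Matrix (Fin n) (Fin n) ℂ), A.IsHermitian →
    ∀ L₁ L₂ L₃ : LagGr n,
      L₁.val = graphOf (0 : Matrix (Fin n) (Fin n) ℂ) →
      L₂.val = graphOf A → L₃.val = vertSub n →
      f L₁ L₂ L₃ = negIdxM A) ∧
  (∀ S : SympSpace n ≃ₗ[ℂ] SympSpace n, IsSymplecticMap S →
    ∀ L₁ L₂ L₃ M₁ M₂ M₃ : LagGr n,
      M₁.val = (L₁.val).map S.toLinearMap →
      M₂.val = (L₂.val).map S.toLinearMap →
      M₃.val = (L₃.val).map S.toLinearMap →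
      f M₁ M₂ M₃ = f L₁ L₂ L₃) ∧
  (∀ L₁ L₂ L₃ L₄ : LagGr n,
    f L₁ L₂ L₃ - f L₁ L₂ L₄ + f L₁ L₃ L₄ - f L₂ L₃ L₄ = 0)

/-! ### The negative index of a Hermitian matrix -/

theorem form_diag {n : ℕ} (U : Matrix (Fin n) (Fin n) ℂ) (d : Fin n → ℝ) (x : Fin n → ℂ) :
    (star x ⬝ᵥ (U * diagonal (fun i => (d i : ℂ)) * Uᴴ) *ᵥ x).re
      = ∑ i, d i * Complex.normSq ((Uᴴ *ᵥ x) i) := by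
  have h : star x ⬝ᵥ (U * diagonal (fun i => (d i : ℂ)) * Uᴴ) *ᵥ x
      = star (Uᴴ *ᵥ x) ⬝ᵥ (diagonal (fun i => (d i : ℂ)) *ᵥ (Uᴴ *ᵥ x)) := by
    rw [star_mulVec, conjTranspose_conjTranspose, ← dotProduct_mulVec, mulVec_mulVec,
      mulVec_mulVec, Matrix.mul_assoc]
  rw [h, dotProduct, Complex.re_sum]
  refine Finset.sum_congr rfl fun i _ => ?_
  simp [mulVec_diagonal, Complex.normSq_apply]
  ring

/-- The negative index is the number of negative diagonal entries. The columns of `U` with `d i < 0`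
span a negative definite subspace of that dimension; conversely, the coordinates with `d i < 0`
determine a vector of a negative definite subspace, because the form is nonnegative on vectors for
which they all vanish. -/
theorem negIdxM_diag {n : ℕ} (U : Matrix (Fin n) (Fin n) ℂ) (hU : Uᴴ * U = 1)
    (d : Fin n → ℝ) :
    negIdxM (U * diagonal (fun i => (d i : ℂ)) * Uᴴ) = Fintype.card {i // d i < 0} := by
  have key := form_diag U d
  unfold negIdxM formNegIdx
  apply IsGreatest.csSup_eq
  constructor
  · let E : ({i // d i < 0} → ℂ) →ₗ[ℂ] (Fin n → ℂ) :=
      U.mulVecLin ∘ₗ Function.ExtendByZero.linearMap ℂ (Subtype.val : {i // d i < 0} → Fin n)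
    have hE : ∀ c, Uᴴ *ᵥ (E c) = Function.extend Subtype.val c 0 := by
      intro c
      simp only [E, LinearMap.comp_apply, mulVecLin_apply, mulVec_mulVec, hU, one_mulVec]
      rfl
    have hinj : Function.Injective E := by
      intro a b hab
      have := congrArg (fun v => Uᴴ *ᵥ v) hab
      simp only [hE] at this
      funext i
      have h2 := congrFun this i.1
      rwa [Subtype.val_injective.extend_apply, Subtype.val_injective.extend_apply] at h2
    refine ⟨LinearMap.range E, ?_, ?_⟩
    · rw [LinearMap.finrank_range_of_inj hinj, Module.finrank_fintype_fun_eq_card]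
    · rintro _ ⟨c, rfl⟩ hc
      rw [key, hE]
      have hc0 : c ≠ 0 := by rintro rfl; simp at hc
      obtain ⟨i, hi⟩ := Function.ne_iff.mp hc0
      refine Finset.sum_neg' (fun j _ => ?_) ⟨i.1, Finset.mem_univ _, ?_⟩
      · by_cases hj : d j < 0
        · exact mul_nonpos_of_nonpos_of_nonneg hj.le (Complex.normSq_nonneg _)
        · rw [Function.extend_apply' _ _ _ (by rintro ⟨a, rfl⟩; exact hj a.2)]
          simp
      · rw [Subtype.val_injective.extend_apply]
        exact mul_neg_of_neg_of_pos i.2 (Complex.normSq_pos.mpr hi)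
  · rintro _ ⟨W, rfl, hW⟩
    let P : W →ₗ[ℂ] ({i // d i < 0} → ℂ) :=
      LinearMap.funLeft ℂ ℂ Subtype.val ∘ₗ Uᴴ.mulVecLin ∘ₗ W.subtype
    have hinj : Function.Injective P := by
      rw [← LinearMap.ker_eq_bot, LinearMap.ker_eq_bot']
      intro w hw
      by_contra hne
      have h1 := hW w w.2 (by simpa using hne)
      rw [key] at h1
      refine absurd h1 (not_lt.mpr (Finset.sum_nonneg fun i _ => ?_))
      by_cases hi : d i < 0
      · have : (Uᴴ *ᵥ (w : Fin n → ℂ)) i = 0 := congrFun hw ⟨i, hi⟩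
        simp [this]
      · exact mul_nonneg (not_lt.mp hi) (Complex.normSq_nonneg _)
    simpa using LinearMap.finrank_le_finrank_of_injective hinj

theorem negIdxM_add_neg {n : ℕ} (A : Matrix (Fin n) (Fin n) ℂ) (hA : A.IsHermitian) :
    negIdxM A + negIdxM (-A) = A.rank := by
  set U : Matrix (Fin n) (Fin n) ℂ := hA.eigenvectorUnitary.1 with hUdef
  have hU : Uᴴ * U = 1 := Unitary.coe_star_mul_self hA.eigenvectorUnitary
  have h1 : A = U * diagonal (fun i => (hA.eigenvalues i : ℂ)) * Uᴴ := by
    conv_lhs => rw [hA.spectral_theorem]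
    rfl
  have h2 : -A = U * diagonal (fun i => ((-hA.eigenvalues i : ℝ) : ℂ)) * Uᴴ := by
    conv_lhs => rw [h1]
    have : diagonal (fun i => ((-hA.eigenvalues i : ℝ) : ℂ))
        = -diagonal (fun i => (hA.eigenvalues i : ℂ)) := by
      rw [diagonal_neg]; congr 1; funext i; simp
    rw [this, Matrix.mul_neg, Matrix.neg_mul]
  have e1 : negIdxM A = Fintype.card {i // hA.eigenvalues i < 0} := by
    conv_lhs => rw [h1]
    exact negIdxM_diag U hU _
  have e2 : negIdxM (-A) = Fintype.card {i // -hA.eigenvalues i < 0} := by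
    rw [h2]
    exact negIdxM_diag U hU _
  rw [e1, e2, hA.rank_eq_card_non_zero_eigs, ← Fintype.card_subtype_or_disjoint]
  · refine Fintype.card_congr (Equiv.subtypeEquivRight fun i => ?_)
    rw [neg_lt_zero, ne_iff_lt_or_gt]
  · rw [Pi.disjoint_iff]
    intro i
    simp only [Prop.disjoint_iff]
    rintro ⟨a, b⟩
    linarith

/-! ### Lagrangian subspaces as graphs -/

/-- A Lagrangian subspace meets the graph of the scalar `t` nontrivially for finitely many real `t`
only: `ω((x, s x), (y, t y)) = (t - s) ⟨x, y⟩`, so witnesses for different `t` are orthogonal. -/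
theorem finite_bad {n : ℕ} (L : LagGr n) :
    {t : ℝ | ∃ x : Fin n → ℂ, x ≠ 0 ∧ (x, (t : ℂ) • x) ∈ L.val}.Finite := by
  set T := {t : ℝ | ∃ x : Fin n → ℂ, x ≠ 0 ∧ (x, (t : ℂ) • x) ∈ L.val} with hT
  choose x hx0 hxL using fun t : T => t.2
  have hli : LinearIndependent ℂ (fun t : T => WithLp.toLp 2 (x t)) := by
    apply linearIndependent_of_ne_zero_of_inner_eq_zero
    · intro t h
      exact hx0 t (by simpa using h)
    · intro s t hst
      have h := (L.2 _).mp (hxL t) _ (hxL s)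
      have h' : ((t : ℝ) - (s : ℝ) : ℂ) * (star (x s) ⬝ᵥ x t) = 0 := by
        rw [← h]
        simp [omegaForm, sub_mul]
      rcases mul_eq_zero.mp h' with h0 | h0
      · exact absurd (Subtype.ext (by exact_mod_cast (sub_eq_zero.mp h0).symm)) hst
      · rw [EuclideanSpace.inner_eq_star_dotProduct, dotProduct_comm]
        exact h0
  have := hli.finite
  exact Set.toFinite T

/-- A Lagrangian subspace transversal to the vertical one projects onto the first factor: if `z` is
orthogonal to the projection, then `(0, z)` is `ω`-orthogonal to `L` and hence lies in `L`. -/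
theorem fst_surj {n : ℕ} (L : LagGr n) (h : ∀ z, ((0 : Fin n → ℂ), z) ∈ L.val → z = 0) :
    L.val.map (LinearMap.fst ℂ _ _) = ⊤ := by
  by_contra hne
  obtain ⟨φ, hφ, hle⟩ := Submodule.exists_le_ker_of_lt_top _ (lt_top_iff_ne_top.mpr hne)
  apply hφ
  have hφx : ∀ x, φ x = ∑ i, x i * φ (Pi.single i 1) := fun x => by
    rw [φ.pi_apply_eq_sum_univ x]
    refine Finset.sum_congr rfl fun i _ => ?_
    rw [smul_eq_mul]; congr 2; funext j; simp [Pi.single_apply, eq_comm]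
  have hz : (fun i => star (φ (Pi.single i 1))) = 0 := by
    apply h
    rw [L.2]
    intro u hu
    have : φ u.1 = 0 := hle ⟨u, hu, rfl⟩
    rw [hφx] at this
    have h2 := congrArg star this
    simpa [omegaForm, dotProduct, star_sum] using h2
  ext i
  have := congrFun hz i
  simpa using this

/-- A Lagrangian subspace transversal to the vertical one is the graph of a Hermitian matrix. -/
theorem exists_graph {n : ℕ} (L : LagGr n)
    (h : ∀ z, ((0 : Fin n → ℂ), z) ∈ L.val → z = 0) :
    ∃ B : Matrix (Fin n) (Fin n) ℂ, B.IsHermitian ∧ L.val = graphOf B := by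
  have hs := fst_surj L h
  let p : L.val →ₗ[ℂ] (Fin n → ℂ) := LinearMap.fst ℂ _ _ ∘ₗ L.val.subtype
  have hp : Function.Bijective p := by
    constructor
    · rw [← LinearMap.ker_eq_bot, LinearMap.ker_eq_bot']
      rintro ⟨⟨a, b⟩, hw⟩ h0
      have ha : a = 0 := h0
      subst ha
      have := h b hw
      subst this
      rfl
    · intro x
      obtain ⟨u, hu, rfl⟩ : x ∈ L.val.map (LinearMap.fst ℂ _ _) := hs ▸ Submodule.mem_top
      exact ⟨⟨u, hu⟩, rfl⟩
  let e := LinearEquiv.ofBijective p hp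
  let B := LinearMap.toMatrix' (LinearMap.snd ℂ _ _ ∘ₗ L.val.subtype ∘ₗ e.symm.toLinearMap)
  have hB : ∀ x, B *ᵥ x = (e.symm x).1.2 := fun x => by
    simp [B, LinearMap.toMatrix'_mulVec]
  have hmem : ∀ x, (x, B *ᵥ x) ∈ L.val := fun x => by
    have h1 : (e.symm x).1.1 = x := e.apply_symm_apply x
    have : (x, B *ᵥ x) = (e.symm x).1 := Prod.ext h1.symm (hB x)
    rw [this]; exact (e.symm x).2
  refine ⟨B, ?_, ?_⟩
  · have hiso : ∀ x y, star x ⬝ᵥ B *ᵥ y = star x ⬝ᵥ Bᴴ *ᵥ y := fun x y => by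
      have := (L.2 _).mp (hmem y) _ (hmem x)
      simp only [omegaForm, sub_eq_zero, star_mulVec] at this
      rw [this, dotProduct_mulVec]
    ext i j
    have := hiso (Pi.single i 1) (Pi.single j 1)
    simpa [← Pi.single_star] using this.symm
  · ext ⟨a, b⟩
    simp only [graphOf, LinearMap.mem_graph_iff, mulVecLin_apply]
    constructor
    · intro hab
      have := L.val.sub_mem hab (hmem a)
      have := h (b - B *ᵥ a) (by simpa using this)
      exact sub_eq_zero.mp this
    · intro hb
      subst hb
      exact hmem a

/-! ### Symplectic maps -/

theorem IsLagrangian.map {n : ℕ} {L : Submodule ℂ (SympSpace n)} (hL : IsLagrangian L)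
    {S : SympSpace n ≃ₗ[ℂ] SympSpace n} (hS : IsSymplecticMap S) :
    IsLagrangian (L.map S.toLinearMap) := by
  intro v
  have hv : v ∈ L.map S.toLinearMap ↔ S.symm v ∈ L := by
    rw [Submodule.mem_map_equiv]
  rw [hv, hL]
  constructor
  · rintro h _ ⟨u, hu, rfl⟩
    have := hS u (S.symm v)
    rw [S.apply_symm_apply, h u hu] at this
    exact this
  · intro h u hu
    rw [← hS, S.apply_symm_apply]
    exact h _ ⟨u, hu, rfl⟩

theorem IsSymplecticMap.symm {n : ℕ} {S : SympSpace n ≃ₗ[ℂ] SympSpace n}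
    (hS : IsSymplecticMap S) : IsSymplecticMap S.symm := fun u v => by
  rw [← hS, S.apply_symm_apply, S.apply_symm_apply]

theorem IsSymplecticMap.trans {n : ℕ} {S T : SympSpace n ≃ₗ[ℂ] SympSpace n}
    (hS : IsSymplecticMap S) (hT : IsSymplecticMap T) : IsSymplecticMap (S.trans T) :=
  fun u v => by rw [LinearEquiv.trans_apply, LinearEquiv.trans_apply, hT, hS]

/-- The action of a symplectic map on the Lagrangian Grassmannian. -/
noncomputable def LagGr.map {n : ℕ} (L : LagGr n) (S : SympSpace n ≃ₗ[ℂ] SympSpace n)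
    (hS : IsSymplecticMap S) : LagGr n := ⟨L.val.map S.toLinearMap, L.2.map hS⟩

/-- The vertical shear `(x, y) ↦ (x, y - B x)`. -/
noncomputable def shear {n : ℕ} (B : Matrix (Fin n) (Fin n) ℂ) :
    SympSpace n ≃ₗ[ℂ] SympSpace n :=
  LinearEquiv.ofLinearMap
    ((LinearMap.fst ℂ _ _).prod (LinearMap.snd ℂ _ _ - B.mulVecLin ∘ₗ LinearMap.fst ℂ _ _))
    ((LinearMap.fst ℂ _ _).prod (LinearMap.snd ℂ _ _ + B.mulVecLin ∘ₗ LinearMap.fst ℂ _ _))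
    (LinearMap.ext fun v => by ext <;> simp) (LinearMap.ext fun v => by ext <;> simp)

theorem shear_apply {n : ℕ} (B : Matrix (Fin n) (Fin n) ℂ) (v : SympSpace n) :
    shear B v = (v.1, v.2 - B *ᵥ v.1) := rfl

theorem shear_symm_apply {n : ℕ} (B : Matrix (Fin n) (Fin n) ℂ) (v : SympSpace n) :
    (shear B).symm v = (v.1, v.2 + B *ᵥ v.1) := rfl

theorem shear_symplectic {n : ℕ} {B : Matrix (Fin n) (Fin n) ℂ} (hB : B.IsHermitian) :
    IsSymplecticMap (shear B) := fun u v => by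
  simp only [shear_apply, omegaForm, star_sub, star_mulVec, hB.eq, dotProduct_sub,
    sub_dotProduct, dotProduct_mulVec]
  ring

theorem shear_map_graphOf {n : ℕ} (B C : Matrix (Fin n) (Fin n) ℂ) :
    (graphOf C).map (shear B).toLinearMap = graphOf (C - B) := by
  ext v
  rw [Submodule.mem_map_equiv, shear_symm_apply]
  simp only [graphOf, LinearMap.mem_graph_iff, mulVecLin_apply, sub_mulVec]
  exact eq_sub_iff_add_eq.symm

theorem mem_vertSub {n : ℕ} (v : SympSpace n) : v ∈ vertSub n ↔ v.1 = 0 := by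
  simp [vertSub, Submodule.mem_prod]

theorem shear_map_vertSub {n : ℕ} (B : Matrix (Fin n) (Fin n) ℂ) :
    (vertSub n).map (shear B).toLinearMap = vertSub n := by
  ext v
  rw [Submodule.mem_map_equiv, shear_symm_apply, mem_vertSub, mem_vertSub]

open scoped ComplexOrder in
theorem vertSub_isLagrangian (n : ℕ) : IsLagrangian (vertSub n) := by
  intro v
  rw [mem_vertSub]
  constructor
  · intro hv u hu
    rw [mem_vertSub] at hu
    simp [omegaForm, hu, hv]
  · intro h
    have := h (0, v.1) (by rw [mem_vertSub])
    exact dotProduct_star_self_eq_zero.mp (by simpa [omegaForm] using this)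

open scoped ComplexOrder in
theorem graphOf_isLagrangian {n : ℕ} {A : Matrix (Fin n) (Fin n) ℂ} (hA : A.IsHermitian) :
    IsLagrangian (graphOf A) := by
  have h0 : IsLagrangian (graphOf (0 : Matrix (Fin n) (Fin n) ℂ)) := by
    intro v
    simp only [graphOf, LinearMap.mem_graph_iff, mulVecLin_apply, zero_mulVec]
    constructor
    · intro hv u hu
      simp [omegaForm, hu, hv]
    · intro h
      have := h (v.2, 0) rfl
      exact dotProduct_star_self_eq_zero.mp (by simpa [omegaForm] using this)
  have := h0.map (shear_symplectic hA.neg)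
  rwa [shear_map_graphOf, zero_sub, neg_neg] at this

/-- The symplectic map `(x, y) ↦ (t x - y, x)`, which carries the graph of the scalar `t` to the
vertical subspace. -/
noncomputable def rotate {n : ℕ} (t : ℝ) : SympSpace n ≃ₗ[ℂ] SympSpace n :=
  LinearEquiv.ofLinearMap
    (LinearMap.prod ((t : ℂ) • LinearMap.fst ℂ _ _ - LinearMap.snd ℂ _ _) (LinearMap.fst ℂ _ _))
    (LinearMap.prod (LinearMap.snd ℂ _ _) ((t : ℂ) • LinearMap.snd ℂ _ _ - LinearMap.fst ℂ _ _))
    (LinearMap.ext fun v => by ext <;> simp) (LinearMap.ext fun v => by ext <;> simp)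

theorem rotate_apply {n : ℕ} (t : ℝ) (v : SympSpace n) :
    rotate t v = ((t : ℂ) • v.1 - v.2, v.1) := rfl

theorem rotate_symm_apply {n : ℕ} (t : ℝ) (v : SympSpace n) :
    (rotate t).symm v = (v.2, (t : ℂ) • v.2 - v.1) := rfl

theorem rotate_symplectic {n : ℕ} (t : ℝ) : IsSymplecticMap (rotate (n := n) t) := fun u v => by
  simp [rotate_apply, omegaForm]

/-- Any two Lagrangian subspaces `L`, `M` have a common Lagrangian complement `N`, and the triple
`(L, M, N)` is symplectically equivalent to `(G_0, G_A, G_∞)` for some Hermitian `A`. Here `N` is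
the graph of a real scalar `t` outside the finite exceptional sets of `L` and `M`. -/
theorem exists_normal_form {n : ℕ} (L M : LagGr n) :
    ∃ (N : LagGr n) (S : SympSpace n ≃ₗ[ℂ] SympSpace n) (A : Matrix (Fin n) (Fin n) ℂ),
      IsSymplecticMap S ∧ A.IsHermitian ∧
      graphOf (0 : Matrix (Fin n) (Fin n) ℂ) = L.val.map S.toLinearMap ∧
      graphOf A = M.val.map S.toLinearMap ∧ vertSub n = N.val.map S.toLinearMap := by
  obtain ⟨t, ht⟩ := ((finite_bad L).union (finite_bad M)).exists_notMem
  rw [Set.mem_union, not_or] at ht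
  have trans : ∀ K : LagGr n,
      t ∉ {t : ℝ | ∃ x : Fin n → ℂ, x ≠ 0 ∧ (x, (t : ℂ) • x) ∈ K.val} →
      ∃ B : Matrix (Fin n) (Fin n) ℂ, B.IsHermitian ∧
        K.val.map (rotate t).toLinearMap = graphOf B := by
    intro K hK
    refine exists_graph (K.map (rotate t) (rotate_symplectic t)) fun z hz => ?_
    by_contra hne
    refine hK ⟨z, hne, ?_⟩
    have hz' : ((0 : Fin n → ℂ), z) ∈ K.val.map (rotate t).toLinearMap := hz
    rw [Submodule.mem_map_equiv, rotate_symm_apply] at hz'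
    simpa using hz'
  obtain ⟨B, hB, hLB⟩ := trans L ht.1
  obtain ⟨C, hC, hMC⟩ := trans M ht.2
  have hS := (rotate_symplectic t).trans (shear_symplectic hB)
  have hcomp : ∀ K : Submodule ℂ (SympSpace n),
      K.map ((rotate t).trans (shear B)).toLinearMap
        = (K.map (rotate t).toLinearMap).map (shear B).toLinearMap := fun K =>
    Submodule.map_comp _ _ K
  refine ⟨⟨_, (vertSub_isLagrangian n).map hS.symm⟩, (rotate t).trans (shear B), C - B, hS,
    hC.sub hB, ?_, ?_, ?_⟩
  · rw [hcomp, hLB, shear_map_graphOf, sub_self]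
  · rw [hcomp, hMC, shear_map_graphOf]
  · ext v
    rw [Submodule.mem_map_equiv, Submodule.mem_map_equiv, LinearEquiv.symm_symm,
      LinearEquiv.apply_symm_apply]

/-- `G_0 ∩ G_A` is a copy of the kernel of `A`. -/
theorem finrank_graph_inf {n : ℕ} (A : Matrix (Fin n) (Fin n) ℂ) :
    A.rank + Module.finrank ℂ
      ↥(graphOf (0 : Matrix (Fin n) (Fin n) ℂ) ⊓ graphOf A) = n := by
  have h : graphOf (0 : Matrix (Fin n) (Fin n) ℂ) ⊓ graphOf A
      = (LinearMap.ker A.mulVecLin).map (LinearMap.inl ℂ (Fin n → ℂ) (Fin n → ℂ)) := by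
    ext ⟨a, b⟩
    simp only [graphOf, Submodule.mem_inf, LinearMap.mem_graph_iff, mulVecLin_apply,
      zero_mulVec, Submodule.mem_map, LinearMap.mem_ker, LinearMap.inl_apply, Prod.mk.injEq]
    constructor
    · rintro ⟨rfl, h⟩
      exact ⟨a, h.symm, rfl, rfl⟩
    · rintro ⟨_, h, rfl, rfl⟩
      exact ⟨rfl, h.symm⟩
  rw [h, ← (Submodule.equivMapOfInjective _ LinearMap.inl_injective _).finrank_eq, Matrix.rank,
    LinearMap.finrank_range_add_finrank_ker, Module.finrank_fin_fun]

/-- Special values: `f(L,L,M) = 0`, `f(M,L,L) = 0`, `f(L,M,L) = n − dim(L ∩ M)`. -/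
theorem duistermaat_index_special_values (n : ℕ) (hn : 1 ≤ n)
    (f : LagGr n → LagGr n → LagGr n → ℤ) (hf : SatisfiesDuiAxioms f)
    (L M : LagGr n) :
    f L L M = 0 ∧ f M L L = 0 ∧
      f L M L = (n : ℤ) - Module.finrank ℂ ↥(L.val ⊓ M.val) := by
  obtain ⟨hnorm, hinv, hcoc⟩ := hf
  obtain ⟨N, S, A, hS, hA, hL, hM, hN⟩ := exists_normal_form L M
  have h0 : (0 : Matrix (Fin n) (Fin n) ℂ).IsHermitian := isHermitian_zero
  let Z : LagGr n := ⟨_, graphOf_isLagrangian h0⟩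
  let G : LagGr n := ⟨_, graphOf_isLagrangian hA⟩
  let G' : LagGr n := ⟨_, graphOf_isLagrangian hA.neg⟩
  let V : LagGr n := ⟨_, vertSub_isLagrangian n⟩
  have hLLN : f L L N = 0 := by
    rw [← hinv S hS L L N Z Z V hL hL hN, hnorm 0 h0 Z Z V rfl rfl rfl]
    have := negIdxM_add_neg 0 h0
    rw [Matrix.rank_zero] at this
    omega
  have hLMN : f L M N = negIdxM A := by
    rw [← hinv S hS L M N Z G V hL hM hN, hnorm A hA Z G V rfl rfl rfl]
  -- the shear by `A` carries `(G_A, G_0, G_∞)` to `(G_0, G_{-A}, G_∞)`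
  have hMLN : f M L N = negIdxM (-A) := by
    rw [← hinv S hS M L N G Z V hM hL hN, ← hnorm (-A) hA.neg Z G' V rfl rfl rfl]
    refine (hinv (shear A) (shear_symplectic hA) G Z V Z G' V ?_ ?_ ?_).symm
    · exact ((shear_map_graphOf A A).trans (by rw [sub_self])).symm
    · exact ((shear_map_graphOf A 0).trans (by rw [zero_sub])).symm
    · exact (shear_map_vertSub A).symm
  have hdim : Module.finrank ℂ ↥(L.val ⊓ M.val)
      = Module.finrank ℂ ↥(graphOf (0 : Matrix (Fin n) (Fin n) ℂ) ⊓ graphOf A) := by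
    rw [hL, hM, ← Submodule.map_inf _ S.injective]
    exact (LinearEquiv.finrank_map_eq S _).symm
  have hrank := finrank_graph_inf A
  have hsum := negIdxM_add_neg A hA
  have c1 := hcoc L L M N
  have c2 := hcoc M L L N
  have c3 := hcoc L M L N
  refine ⟨by linarith, by linarith, ?_⟩
  rw [hdim]
  zify at hrank hsum
  linarith
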